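/- Let G be a group, K ⊆ G a subset, φ : G → ℝ a homogeneous quasi-morphism with defect at most D, and C ≥ 0 a constant with |φ(k)| ≤ C for all k ∈ K. Let g ∈ G and n ≥ 1 a natural number. If gⁿ can be written as a product of N elements (N ≥ 1), each conjugate to an element of K or to the inverse of an element of K, then n·|φ(g)| ≤ N·(D + C); equivalently, if also φ(g) ≠ 0 and D + C > 0, then log n + log(|φ(g)|/(D + C)) ≤ log N. -/

import Mathlib

/-- If `φ` is a homogeneous quasi-morphism with defect at most `D`, bounded by `C`
on `K`, and `gⁿ` (`n ≥ 1`) is a product of `N ≥ 1` conjugates of elements of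
`K ∪ K⁻¹`, then `n |φ(g)| ≤ N (D + C)`; equivalently, if moreover `φ(g) ≠ 0` and
`D + C > 0`, then `log n + log (|φ(g)| / (D + C)) ≤ log N`. -/
theorem quasimorphism_power_estimate {G : Type*} [Group G] (K : Set G)
    (φ : G → ℝ) (D C : ℝ)
    (hD : ∀ g h : G, |φ (g * h) - φ g - φ h| ≤ D)
    (hhom : ∀ (g : G) (p : ℤ), φ (g ^ p) = p * φ g)
    (hC : 0 ≤ C) (hCK : ∀ k ∈ K, |φ k| ≤ C)
    (g : G) (n : ℕ) (hn : 1 ≤ n)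
    (l : List G) (hlen : 1 ≤ l.length) (hprod : l.prod = g ^ n)
    (hmem : ∀ x ∈ l, ∃ k ∈ K, IsConj k x ∨ IsConj k⁻¹ x) :
    (n : ℝ) * |φ g| ≤ (l.length : ℝ) * (D + C) ∧
    (φ g ≠ 0 → 0 < D + C →
      Real.log n + Real.log (|φ g| / (D + C)) ≤ Real.log l.length) := by
  have hconj : ∀ a b : G, IsConj a b → φ b = φ a := by
    intro a b hab
    obtain ⟨c, rfl⟩ := isConj_iff.1 hab
    have hinv : φ c⁻¹ = - φ c := by
      have := hhom c (-1)
      simpa using this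
    have key : ∀ x : G, |φ (c * x * c⁻¹) - φ x| ≤ 2 * D := by
      intro x
      have h1 := abs_le.1 (hD (c * x) c⁻¹)
      have h2 := abs_le.1 (hD c x)
      rw [hinv] at h1
      rw [abs_le]
      constructor <;> linarith [h1.1, h1.2, h2.1, h2.2]
    by_contra hne
    have hpos : 0 < |φ (c * a * c⁻¹) - φ a| := abs_pos.2 (sub_ne_zero.2 hne)
    obtain ⟨m, hm⟩ := exists_nat_gt (2 * D / |φ (c * a * c⁻¹) - φ a|)
    rw [div_lt_iff₀ hpos] at hm
    have h3 := key (a ^ (m : ℤ))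
    rw [← conj_zpow, hhom, hhom, ← mul_sub, abs_mul] at h3
    simp only [Int.cast_natCast, Nat.abs_cast] at h3
    linarith
  have hel : ∀ x : G, (∃ k ∈ K, IsConj k x ∨ IsConj k⁻¹ x) → |φ x| ≤ C := by
    rintro x ⟨k, hk, h | h⟩
    · rw [hconj _ _ h]
      exact hCK k hk
    · have hinv : φ k⁻¹ = - φ k := by
        have := hhom k (-1)
        simpa using this
      rw [hconj _ _ h, hinv, abs_neg]
      exact hCK k hk
  have hlist : ∀ l : List G, (∀ x ∈ l, ∃ k ∈ K, IsConj k x ∨ IsConj k⁻¹ x) →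
      |φ l.prod| ≤ (l.length : ℝ) * (D + C) := by
    intro l
    induction l with
    | nil =>
      intro _
      have h1 : φ 1 = 0 := by
        have := hhom 1 0
        simpa using this
      simp [h1]
    | cons a t ih =>
      intro h
      have h1 := abs_le.1 (ih fun x hx => h x (List.mem_cons_of_mem _ hx))
      have h2 := abs_le.1 (hel a (h a List.mem_cons_self))
      have h3 := abs_le.1 (hD a t.prod)
      rw [List.prod_cons, List.length_cons, abs_le]
      push_cast
      constructor <;> linarith [h1.1, h1.2, h2.1, h2.2, h3.1, h3.2]
  have hmain : (n : ℝ) * |φ g| ≤ (l.length : ℝ) * (D + C) := by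
    have h1 := hlist l hmem
    have h2 := hhom g (n : ℤ)
    rw [zpow_natCast] at h2
    rw [hprod, h2, abs_mul] at h1
    simpa using h1
  refine ⟨hmain, fun hg hDC => ?_⟩
  have hn0 : (0 : ℝ) < n := by exact_mod_cast hn
  have hg0 : 0 < |φ g| := abs_pos.2 hg
  rw [← Real.log_mul hn0.ne' (div_pos hg0 hDC).ne']
  apply Real.log_le_log (mul_pos hn0 (div_pos hg0 hDC))
  rw [← mul_div_assoc, div_le_iff₀ hDC]
  exact hmain
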